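/- Let T_s be a spanning tree of the connected graph G with incidence matrices B_s ∈ ℝ^{n×(n−1)} (for T_s) and B ∈ ℝ^{n×m} (for G). Then B_s B_s† B = B, and consequently, defining B_s^# = (B_s† B)ᵀ ∈ ℝ^{m×(n−1)}, we have B_s^# B_sᵀ = Bᵀ. -/

import Mathlib

open Matrix

/-- A column with exactly one entry `1`, one entry `-1` and zeros elsewhere sums to zero. -/
lemma sum_eq_zero_of_incidence_column {ι : Type*} [Fintype ι] {b : ι → ℝ} {i j : ι}
    (hij : i ≠ j) (hi : b i = 1) (hj : b j = -1) (h0 : ∀ k, k ≠ i → k ≠ j → b k = 0) :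
    ∑ k, b k = 0 := by
  rw [Fintype.sum_eq_add i j hij fun k hk => h0 k hk.1 hk.2, hi, hj]
  norm_num

theorem spanning_tree_incidence_identities
    (n m : ℕ) (hn : 2 ≤ n)
    (B : Matrix (Fin n) (Fin m) ℝ)
    (Bs : Matrix (Fin n) (Fin (n - 1)) ℝ)
    -- B is the oriented incidence matrix of the connected graph G
    (hB : ∀ e : Fin m, ∃ i j : Fin n, i ≠ j ∧ B i e = 1 ∧ B j e = -1 ∧
      ∀ k, k ≠ i → k ≠ j → B k e = 0)
    (hconn : ∀ v : Fin n → ℝ, B.transpose.mulVec v = 0 → ∃ c, ∀ i, v i = c)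
    -- Bs is the oriented incidence matrix of a spanning tree T_s of G
    (hBs : ∀ e : Fin (n - 1), ∃ i j : Fin n, i ≠ j ∧ Bs i e = 1 ∧ Bs j e = -1 ∧
      ∀ k, k ≠ i → k ≠ j → Bs k e = 0)
    (htree : ∀ v : Fin n → ℝ, Bs.transpose.mulVec v = 0 → ∃ c, ∀ i, v i = c)
    -- every edge of T_s is an edge of G
    (hsub : ∀ e : Fin (n - 1), ∃ f : Fin m, ∀ i, Bs i e = B i f)
    -- Bs† : the Moore–Penrose pseudoinverse of Bs
    (Bsdag : Matrix (Fin (n - 1)) (Fin n) ℝ)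
    (h1 : Bs * Bsdag * Bs = Bs) (h2 : Bsdag * Bs * Bsdag = Bsdag)
    (h3 : (Bs * Bsdag).transpose = Bs * Bsdag) (h4 : (Bsdag * Bs).transpose = Bsdag * Bs) :
    Bs * Bsdag * B = B ∧ (Bsdag * B).transpose * Bs.transpose = B.transpose := by
  have hker : Bsᵀ * (1 - Bs * Bsdag) = 0 := by
    have h := congrArg transpose h1
    rw [transpose_mul, h3] at h
    rw [Matrix.mul_sub, h, Matrix.mul_one, sub_self]
  have hsymm : (1 - Bs * Bsdag)ᵀ = 1 - Bs * Bsdag := by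
    rw [transpose_sub, transpose_one, h3]
  have hzero : (1 - Bs * Bsdag) * B = 0 := by
    generalize 1 - Bs * Bsdag = Q at hker hsymm ⊢
    ext i e
    obtain ⟨c, hc⟩ := htree (fun k => Q k i) (by
      ext a
      exact congrFun (congrFun hker a) i)
    obtain ⟨p, q, hpq, hp, hq, h0⟩ := hB e
    have hrow : ∀ k, Q i k = c := fun k => by
      rw [← hc k, ← transpose_apply Q i k, hsymm]
    simp only [Matrix.mul_apply, hrow, ← Finset.mul_sum, Matrix.zero_apply]
    rw [sum_eq_zero_of_incidence_column hpq hp hq h0, mul_zero]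
  have hmain : Bs * Bsdag * B = B := by
    rw [Matrix.sub_mul, Matrix.one_mul, sub_eq_zero] at hzero
    exact hzero.symm
  refine ⟨hmain, ?_⟩
  rw [← transpose_mul, ← Matrix.mul_assoc, hmain]
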